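/- Let n ≥ 2 and let μ(n,1) = (1 − 1/n, −1/n, …, −1/n) ∈ ℝ^n. Then the minimal integer r ≥ 1 such that 0 ∈ C_r(O_{μ(n,1)}) equals n. -/

import Mathlib

/-- The `r`-th partial convex hull of a set `X`: the union of the convex hulls of all
`r`-tuples of points of `X`. -/
def partialConvexHull {E : Type*} [AddCommGroup E] [Module ℝ E]
    (r : ℕ) (X : Set E) : Set E :=
  {y | ∃ f : Fin r → E, (∀ i, f i ∈ X) ∧ y ∈ convexHull ℝ (Set.range f)}

/-- The coadjoint orbit `O_λ` of `SU(n)`: the set of `n × n` complex Hermitian matrices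
of trace zero whose eigenvalues, listed with multiplicity, are the entries of `lam`. -/
def coadjointOrbit {n : ℕ} (lam : Fin n → ℝ) : Set (Matrix (Fin n) (Fin n) ℂ) :=
  {A | A.trace = 0 ∧ ∃ hA : A.IsHermitian, ∃ σ : Equiv.Perm (Fin n),
      ∀ i, hA.eigenvalues (σ i) = lam i}

/-!
If `lam` has `k` entries different from `c`, then `A - c • 1` has rank `k` for every `A` in the
orbit of `lam`. Rank is subadditive, so if `0` is a convex combination of `r` points of the orbit,
then `-c • 1`, which has rank `n` when `c ≠ 0`, has rank at most `r * k`; hence `n ≤ r * k`.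
For `μ(n,1)` and `c = -1/n` this reads `n ≤ r`. Conversely, for any `lam` with zero sum, the `n`
diagonal matrices whose diagonals are the cyclic shifts of `lam` add up to `0`.
-/

open Matrix Polynomial

section Rank

variable {m n R K : Type*} [Fintype n]

lemma matrix_rank_smul_le [CommSemiring K] [StrongRankCondition K] [Monoid R]
    [DistribMulAction R K] [IsScalarTower R K K] (a : R) (A : Matrix m n K) :
    (a • A).rank ≤ A.rank := by
  classical
  calc (a • A).rank = (A * (a • (1 : K)) • (1 : Matrix n n K)).rank := by
        rw [Matrix.mul_smul, Matrix.mul_one, smul_one_smul]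
    _ ≤ A.rank := rank_mul_le_left _ _

lemma matrix_rank_sum_le [Field K] {ι : Type*} (s : Finset ι) (A : ι → Matrix m n K) :
    (∑ i ∈ s, A i).rank ≤ ∑ i ∈ s, (A i).rank := by
  have h := LinearMap.rank_finsetSum_le s fun i => (A i).mulVecLin
  rw [← map_sum] at h
  simp only [LinearMap.rank, ← Module.finrank_eq_rank] at h
  exact_mod_cast h

lemma matrix_rank_sub_le_sum_of_mem_affineSpan [Field K] [Ring R] [Module R K] [IsScalarTower R K K]
    {ι : Type*} [Fintype ι] {A : ι → Matrix m n K} {B : Matrix m n K}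
    (hB : B ∈ affineSpan R (Set.range A)) (C : Matrix m n K) :
    (B - C).rank ≤ ∑ i, (A i - C).rank := by
  obtain ⟨w, hw, rfl⟩ := eq_affineCombination_of_mem_affineSpan_of_fintype hB
  calc (Finset.univ.affineCombination R A w - C).rank = (∑ i, w i • (A i - C)).rank := by
        rw [Finset.affineCombination_eq_linear_combination _ _ _ hw]
        simp only [smul_sub, Finset.sum_sub_distrib, ← Finset.sum_smul, hw, one_smul]
    _ ≤ ∑ i, (w i • (A i - C)).rank := matrix_rank_sum_le _ _
    _ ≤ ∑ i, (A i - C).rank := Finset.sum_le_sum fun i _ => matrix_rank_smul_le _ _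

end Rank

lemma exists_equiv_comp_eq_of_map_univ_val_eq {α β γ : Type*} [Fintype α] [Fintype β]
    {f : α → γ} {g : β → γ} (h : Finset.univ.val.map f = Finset.univ.val.map g) :
    ∃ e : β ≃ α, f ∘ e = g := by
  classical
  have hfiber (c : γ) : Nonempty ({b // g b = c} ≃ {a // f a = c}) := by
    refine ⟨Fintype.equivOfCardEq ?_⟩
    have hcount := congrArg (Multiset.count c) h
    simp only [Multiset.count_map, eq_comm (a := c)] at hcount
    simpa only [Fintype.card_subtype, Finset.card_def, Finset.filter_val] using hcount.symm
  let e (c : γ) := (hfiber c).some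
  exact ⟨Equiv.ofFiberEquiv e, funext <| Equiv.ofFiberEquiv_map e⟩

section Hermitian

variable {n 𝕜 : Type*} [Fintype n] [DecidableEq n] [RCLike 𝕜] {A : Matrix n n 𝕜}

lemma rank_sub_smul_one_eq_card_eigenvalues_ne (hA : A.IsHermitian) (c : ℝ) :
    (A - (c : 𝕜) • 1).rank = Fintype.card {i // hA.eigenvalues i ≠ c} := by
  have hdiag : A - (c : 𝕜) • 1 = Unitary.conjStarAlgAut 𝕜 _ hA.eigenvectorUnitary
      (diagonal fun i => (hA.eigenvalues i : 𝕜) - (c : 𝕜)) := by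
    rw [← diagonal_sub, map_sub, ← smul_one_eq_diagonal, map_smul, map_one]
    exact congrArg (· - (c : 𝕜) • 1) hA.spectral_theorem
  rw [hdiag, Unitary.conjStarAlgAut_apply, ← Unitary.coe_star]
  simp [-isUnit_iff_ne_zero, -Unitary.coe_star, rank_diagonal, sub_eq_zero]

lemma exists_perm_eigenvalues_comp_eq_of_charpoly_eq (hA : A.IsHermitian) {lam : n → ℝ}
    (h : A.charpoly = ∏ i, (X - C (lam i : 𝕜))) :
    ∃ σ : Equiv.Perm n, hA.eigenvalues ∘ σ = lam := by
  apply exists_equiv_comp_eq_of_map_univ_val_eq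
  have hroots : A.charpoly.roots = Finset.univ.val.map fun i => (lam i : 𝕜) := by
    rw [h, ← roots_multiset_prod_X_sub_C (Finset.univ.val.map _), Multiset.map_map]
    rfl
  simpa [Function.comp_def] using
    congrArg (Multiset.map RCLike.re) (hA.roots_charpoly_eq_eigenvalues.symm.trans hroots)

end Hermitian

lemma zero_mem_partialConvexHull_of_sum_eq_zero {E : Type*} [AddCommGroup E] [Module ℝ E]
    {r : ℕ} [NeZero r] {X : Set E} {f : Fin r → E} (hf : ∀ i, f i ∈ X) (hsum : ∑ i, f i = 0) :
    0 ∈ partialConvexHull r X := by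
  refine ⟨f, hf, ?_⟩
  have hcenter : Finset.univ.centerMass (fun _ => (1 : ℝ)) f = 0 := by
    simp [Finset.centerMass, hsum]
  rw [← hcenter]
  exact Finset.univ.centerMass_mem_convexHull (by simp) (by simp [NeZero.pos])
    fun i _ => Set.mem_range_self i

section CoadjointOrbit

variable {n : ℕ} {lam : Fin n → ℝ}

lemma rank_sub_smul_one_of_mem_coadjointOrbit {A : Matrix (Fin n) (Fin n) ℂ}
    (hA : A ∈ coadjointOrbit lam) (c : ℝ) :
    (A - (c : ℂ) • 1).rank = Fintype.card {i // lam i ≠ c} := by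
  obtain ⟨-, hA, σ, hσ⟩ := hA
  calc (A - (c : ℂ) • 1).rank = Fintype.card {i // hA.eigenvalues i ≠ c} :=
        rank_sub_smul_one_eq_card_eigenvalues_ne hA c
    _ = Fintype.card {i // lam i ≠ c} :=
        (Fintype.card_congr (σ.subtypeEquiv fun i => by rw [hσ])).symm

theorem le_mul_card_ne_of_zero_mem_partialConvexHull {r : ℕ} {c : ℝ} (hc : c ≠ 0)
    (h : 0 ∈ partialConvexHull r (coadjointOrbit lam)) :
    n ≤ r * Fintype.card {i // lam i ≠ c} := by
  obtain ⟨A, hA, h0⟩ := h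
  calc n = (0 - (c : ℂ) • (1 : Matrix (Fin n) (Fin n) ℂ)).rank := by
        rw [zero_sub, ← neg_smul, rank_smul_of_mem_nonZeroDivisors, rank_one, Fintype.card_fin]
        simpa using hc
    _ ≤ ∑ i, (A i - (c : ℂ) • 1).rank :=
        matrix_rank_sub_le_sum_of_mem_affineSpan (convexHull_subset_affineSpan _ h0) _
    _ = r * Fintype.card {i // lam i ≠ c} := by
        simp only [rank_sub_smul_one_of_mem_coadjointOrbit (hA _), Finset.sum_const,
          Finset.card_univ, Fintype.card_fin, smul_eq_mul]

lemma diagonal_comp_perm_mem_coadjointOrbit (hlam : ∑ i, lam i = 0) (τ : Equiv.Perm (Fin n)) :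
    diagonal (fun i => (lam (τ i) : ℂ)) ∈ coadjointOrbit lam := by
  have hA : (diagonal fun i => (lam (τ i) : ℂ)).IsHermitian :=
    isHermitian_diagonal_of_self_adjoint _ (funext fun i => Complex.conj_ofReal _)
  have htrace : (diagonal fun i => (lam (τ i) : ℂ)).trace = 0 := by
    rw [trace_diagonal, Equiv.sum_comp τ fun i => (lam i : ℂ)]
    exact_mod_cast hlam
  obtain ⟨σ, hσ⟩ := exists_perm_eigenvalues_comp_eq_of_charpoly_eq hA (lam := lam) <| by
    rw [charpoly_diagonal]
    exact Equiv.prod_comp τ fun i => X - C (lam i : ℂ)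
  exact ⟨htrace, hA, σ, congrFun hσ⟩

theorem zero_mem_partialConvexHull_coadjointOrbit [NeZero n] (hlam : ∑ i, lam i = 0) :
    0 ∈ partialConvexHull n (coadjointOrbit lam) := by
  refine zero_mem_partialConvexHull_of_sum_eq_zero
    (fun k => diagonal_comp_perm_mem_coadjointOrbit hlam (Equiv.addLeft k)) ?_
  have hshifts (i : Fin n) : ∑ k, lam (k + i) = 0 :=
    (Equiv.sum_comp (Equiv.addRight i) lam).trans hlam
  calc ∑ k, diagonal (fun i => (lam (k + i) : ℂ))
      = diagonal (∑ k, fun i => (lam (k + i) : ℂ)) :=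
        (map_sum (diagonalAddMonoidHom (Fin n) ℂ) _ _).symm
    _ = 0 := by
        rw [← diagonal_zero]
        congr 1
        ext i
        simpa using congrArg Complex.ofReal (hshifts i)

end CoadjointOrbit

section FundWeight

/-- The fundamental weight `μ(n,k) = (1 - k/n, …, 1 - k/n, -k/n, …, -k/n)`, in which the first `k`
of the `n` entries are `1 - k/n`. -/
noncomputable def fundWeight (n k : ℕ) (i : Fin n) : ℝ :=
  if (i : ℕ) < k then 1 - (k : ℝ) / n else -((k : ℝ) / n)

variable {n k : ℕ}

lemma fundWeight_eq_ite_sub (i : Fin n) :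
    fundWeight n k i = (if (i : ℕ) < k then 1 else 0) - (k : ℝ) / n := by
  unfold fundWeight
  split_ifs <;> ring

lemma sum_fundWeight [NeZero n] (hk : k ≤ n) : ∑ i, fundWeight n k i = 0 := by
  have hn : (n : ℝ) ≠ 0 := NeZero.ne _
  simp [fundWeight_eq_ite_sub, Finset.sum_sub_distrib, Fin.card_filter_val_lt, hk,
    mul_div_cancel₀, hn]

lemma card_fundWeight_ne (hk : k ≤ n) :
    Fintype.card {i // fundWeight n k i ≠ -((k : ℝ) / n)} = k := by
  simp [fundWeight_eq_ite_sub, Fintype.card_subtype, Fin.card_filter_val_lt, hk]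

end FundWeight

/-- For `μ(n,1) = (1 - 1/n, -1/n, …, -1/n)`, the minimal `r ≥ 1` with
`0 ∈ C_r(O_{μ(n,1)})` equals `n`. -/
theorem minR_zero_mem_fundWeight_one (n : ℕ) (hn : 2 ≤ n) :
    IsLeast {r : ℕ | 1 ≤ r ∧
        (0 : Matrix (Fin n) (Fin n) ℂ) ∈ partialConvexHull r (coadjointOrbit
          (fun i : Fin n => if (i : ℕ) < 1 then 1 - (1 : ℝ) / n else -((1 : ℝ) / n)))}
      n := by
  have : NeZero n := ⟨by omega⟩
  have hweight : (fun i : Fin n => if (i : ℕ) < 1 then 1 - (1 : ℝ) / n else -((1 : ℝ) / n)) =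
      fundWeight n 1 := by
    ext i
    simp only [fundWeight, Nat.cast_one]
  rw [hweight]
  refine ⟨⟨by omega, zero_mem_partialConvexHull_coadjointOrbit (sum_fundWeight (by omega))⟩, ?_⟩
  rintro r ⟨-, hr⟩
  have hc : -(((1 : ℕ) : ℝ) / n) ≠ 0 := by simp [NeZero.ne n]
  simpa only [card_fundWeight_ne (show 1 ≤ n by omega), mul_one] using
    le_mul_card_ne_of_zero_mem_partialConvexHull hc hr
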